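/- For every triple of type A τ = (k, p, q) there exists a unique permutation w(τ) of the positive integers (fixing all but finitely many integers) of minimal inversion number among those satisfying #{ j > p_i : w(j) ≤ q_i } = k_i for all 1 ≤ i ≤ s. The permutation w(τ) avoids the pattern 2143 and is not the identity, and the map τ ↦ w(τ) is a bijection from the set of triples of type A onto the set of non-identity permutations of the positive integers (fixing all but finitely many integers) that avoid the pattern 2143. -/

import Mathlib

/-- A triple of type A: sequences `k₁ < ⋯ < k_s`, `p₁ ≥ ⋯ ≥ p_s`, `q₁ ≤ ⋯ ≤ q_s` of
positive integers with `k_i ≤ q_i`, `(p_i − p_{i+1}) + (q_{i+1} − q_i) > k_{i+1} − k_i`,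
and `p_s − q_s + k_s > 0`.  The sequences are recorded as functions on `ℕ` (1-based),
normalized to vanish outside `{1, …, s}`. -/
structure TripleA where
  s : ℕ
  kf : ℕ → ℕ
  pf : ℕ → ℕ
  qf : ℕ → ℕ
  hs : 1 ≤ s
  hpos : ∀ i, 1 ≤ i → i ≤ s → 0 < kf i ∧ 0 < pf i ∧ 0 < qf i
  hkinc : ∀ i, 1 ≤ i → i < s → kf i < kf (i + 1)
  hpdec : ∀ i, 1 ≤ i → i < s → pf (i + 1) ≤ pf i
  hqinc : ∀ i, 1 ≤ i → i < s → qf i ≤ qf (i + 1)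
  hkq : ∀ i, 1 ≤ i → i ≤ s → kf i ≤ qf i
  /-- `(p_i − p_{i+1}) + (q_{i+1} − q_i) > k_{i+1} − k_i`, in subtraction-free form. -/
  hineq : ∀ i, 1 ≤ i → i < s → kf (i + 1) + pf (i + 1) + qf i < kf i + pf i + qf (i + 1)
  /-- `p_s − q_s + k_s > 0`, in subtraction-free form. -/
  hlast : qf s < pf s + kf s
  hnorm : ∀ i, (i = 0 ∨ s < i) → kf i = 0 ∧ pf i = 0 ∧ qf i = 0

/-- Permutations of the positive integers are encoded as permutations of `ℕ`
fixing `0`; this predicate says that all but finitely many integers are fixed. -/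
def FixesAeFin (w : Equiv.Perm ℕ) : Prop := {n : ℕ | w n ≠ n}.Finite

/-- The inversion number of a permutation: the number of pairs `i < j` with `w i > w j`. -/
noncomputable def invNum (w : Equiv.Perm ℕ) : ℕ :=
  {p : ℕ × ℕ | p.1 < p.2 ∧ w p.2 < w p.1}.ncard

/-- `w` is a finitary permutation of the positive integers satisfying the counting
conditions `#{ j > p_i : w(j) ≤ q_i } = k_i` of the triple `τ`. -/
def SatisfiesTriple (τ : TripleA) (w : Equiv.Perm ℕ) : Prop :=
  w 0 = 0 ∧ FixesAeFin w ∧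
    ∀ i, 1 ≤ i → i ≤ τ.s → {j : ℕ | τ.pf i < j ∧ w j ≤ τ.qf i}.ncard = τ.kf i

/-- `w` has minimal inversion number among the permutations satisfying `τ`. -/
def IsMinFor (τ : TripleA) (w : Equiv.Perm ℕ) : Prop :=
  SatisfiesTriple τ w ∧ ∀ w' : Equiv.Perm ℕ, SatisfiesTriple τ w' → invNum w ≤ invNum w'

/-- `w` avoids the pattern `2143`: there are no `a < b < c < d` with
`w(b) < w(a) < w(d) < w(c)`. -/
def Avoids2143 (w : Equiv.Perm ℕ) : Prop :=
  ¬ ∃ a b c d : ℕ, a < b ∧ b < c ∧ c < d ∧ w b < w a ∧ w a < w d ∧ w d < w c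

namespace VexTriple

/-- positions `j > p` with `w j ≤ q` -/
def SW (w : Equiv.Perm ℕ) (p q : ℕ) : Finset ℕ :=
  ((Finset.range (q + 1)).image w.symm).filter (fun j => p < j)

/-- positions `j ≤ p` with `w j > q` -/
def NE (w : Equiv.Perm ℕ) (p q : ℕ) : Finset ℕ :=
  (Finset.range (p + 1)).filter (fun j => q < w j)

/-- positions `j ≤ p` with `w j ≤ q` -/
def NW (w : Equiv.Perm ℕ) (p q : ℕ) : Finset ℕ :=
  (Finset.range (p + 1)).filter (fun j => w j ≤ q)

lemma mem_SW {w : Equiv.Perm ℕ} {p q j : ℕ} : j ∈ SW w p q ↔ p < j ∧ w j ≤ q := by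
  simp only [SW, Finset.mem_filter, Finset.mem_image, Finset.mem_range]
  constructor
  · rintro ⟨⟨a, ha, rfl⟩, h⟩
    refine ⟨h, ?_⟩
    simp; omega
  · rintro ⟨h, h2⟩
    exact ⟨⟨w j, by omega, by simp⟩, h⟩

lemma mem_NE {w : Equiv.Perm ℕ} {p q j : ℕ} : j ∈ NE w p q ↔ j ≤ p ∧ q < w j := by
  simp only [NE, Finset.mem_filter, Finset.mem_range]; omega

lemma mem_NW {w : Equiv.Perm ℕ} {p q j : ℕ} : j ∈ NW w p q ↔ j ≤ p ∧ w j ≤ q := by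
  simp only [NW, Finset.mem_filter, Finset.mem_range]; omega

lemma ncard_SW (w : Equiv.Perm ℕ) (p q : ℕ) :
    {j : ℕ | p < j ∧ w j ≤ q}.ncard = (SW w p q).card := by
  rw [← Set.ncard_coe_finset]
  congr 1
  ext j
  simp [mem_SW]

lemma NW_add_NE (w : Equiv.Perm ℕ) (p q : ℕ) : (NW w p q).card + (NE w p q).card = p + 1 := by
  rw [← Finset.card_union_of_disjoint]
  · have : NW w p q ∪ NE w p q = Finset.range (p + 1) := by
      ext j; simp only [Finset.mem_union, mem_NW, mem_NE, Finset.mem_range]; omega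
    rw [this]; simp
  · rw [Finset.disjoint_left]; intro j; simp only [mem_NW, mem_NE]; omega

lemma NW_add_SW (w : Equiv.Perm ℕ) (p q : ℕ) : (NW w p q).card + (SW w p q).card = q + 1 := by
  rw [← Finset.card_union_of_disjoint]
  · have : NW w p q ∪ SW w p q = (Finset.range (q + 1)).image w.symm := by
      ext j; simp only [Finset.mem_union, mem_NW, mem_SW, Finset.mem_image, Finset.mem_range]
      constructor
      · intro h
        exact ⟨w j, by omega, by simp⟩
      · rintro ⟨a, ha, rfl⟩
        simp; omega
    rw [this, Finset.card_image_of_injective _ w.symm.injective]; simp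
  · rw [Finset.disjoint_left]; intro j; simp only [mem_NW, mem_SW]; omega

lemma NW_pos {w : Equiv.Perm ℕ} (h0 : w 0 = 0) (p q : ℕ) : 0 < (NW w p q).card :=
  Finset.card_pos.2 ⟨0, by simp [mem_NW, h0]⟩

lemma exists_bound {w : Equiv.Perm ℕ} (h : FixesAeFin w) :
    ∃ N, (∀ n, N < n → w n = n) ∧ (∀ n, n ≤ N → w n ≤ N) := by
  obtain ⟨N, hN⟩ := h.bddAbove
  have h1 : ∀ n, N < n → w n = n := by
    intro n hn
    by_contra hc
    have := hN (show n ∈ {n : ℕ | w n ≠ n} from hc)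
    omega
  refine ⟨N, h1, fun n hn => ?_⟩
  by_contra hc
  have := w.injective (h1 (w n) (by omega))
  omega

lemma fixes_of_bound {w : Equiv.Perm ℕ} {N : ℕ} (h : ∀ n, N < n → w n = n) : FixesAeFin w := by
  refine (Set.finite_Iic N).subset ?_
  intro n hn
  simp only [Set.mem_ofPred_eq] at hn
  simp only [Set.mem_Iic]
  by_contra hc
  exact hn (h n (by omega))

lemma fixes_mul {u v : Equiv.Perm ℕ} (hu : FixesAeFin u) (hv : FixesAeFin v) :
    FixesAeFin (u * v) := by
  refine (hu.union hv).subset ?_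
  intro n hn
  simp only [Set.mem_ofPred_eq, Equiv.Perm.mul_apply, Set.mem_union] at hn ⊢
  by_contra hc
  push Not at hc
  rw [hc.2, hc.1] at hn
  exact hn rfl

lemma fixes_swap (a b : ℕ) : FixesAeFin (Equiv.swap a b) := by
  refine (Set.toFinite {a, b}).subset ?_
  intro n hn
  simp only [Set.mem_ofPred_eq] at hn
  by_contra hc
  simp at hc
  exact hn (Equiv.swap_apply_of_ne_of_ne hc.1 hc.2)

lemma sat_iff {τ : TripleA} {w : Equiv.Perm ℕ} : SatisfiesTriple τ w ↔
    w 0 = 0 ∧ FixesAeFin w ∧ ∀ i, 1 ≤ i → i ≤ τ.s → (SW w (τ.pf i) (τ.qf i)).card = τ.kf i := by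
  simp only [SatisfiesTriple, ncard_SW]

/-- `(a, b)` is separated by the triple `τ` -/
def SepBy (τ : TripleA) (w : Equiv.Perm ℕ) (i a b : ℕ) : Prop :=
  1 ≤ i ∧ i ≤ τ.s ∧ a ≤ τ.pf i ∧ τ.pf i < b ∧ w b ≤ τ.qf i ∧ τ.qf i < w a

def Sep (τ : TripleA) (w : Equiv.Perm ℕ) : Prop :=
  ∀ a b, a < b → w b < w a → ∃ i, SepBy τ w i a b

lemma p_anti (τ : TripleA) {i j : ℕ} (hi : 1 ≤ i) (hij : i ≤ j) (hj : j ≤ τ.s) :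
    τ.pf j ≤ τ.pf i := by
  induction j, hij using Nat.le_induction with
  | base => exact le_rfl
  | succ n hn ih => exact (τ.hpdec n (by omega) (by omega)).trans (ih (by omega))

lemma q_mono (τ : TripleA) {i j : ℕ} (hi : 1 ≤ i) (hij : i ≤ j) (hj : j ≤ τ.s) :
    τ.qf i ≤ τ.qf j := by
  induction j, hij using Nat.le_induction with
  | base => exact le_rfl
  | succ n hn ih => exact (ih (by omega)).trans (τ.hqinc n (by omega) (by omega))

lemma k_strict (τ : TripleA) {i j : ℕ} (hi : 1 ≤ i) (hij : i < j) (hj : j ≤ τ.s) :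
    τ.kf i < τ.kf j := by
  induction j, hij using Nat.le_induction with
  | base => exact τ.hkinc i hi (by omega)
  | succ n hn ih => exact (ih (by omega)).trans (τ.hkinc n (by omega) (by omega))

lemma lt_of_p (τ : TripleA) {i j : ℕ} (hi : 1 ≤ i) (hj : j ≤ τ.s)
    (h : τ.pf i < τ.pf j) : j < i := by
  by_contra hc
  have := p_anti τ hi (show i ≤ j by omega) hj
  omega

lemma lt_of_q (τ : TripleA) {i j : ℕ} (hi : i ≤ τ.s) (hj : 1 ≤ j)
    (h : τ.qf i < τ.qf j) : i < j := by
  by_contra hc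
  have := q_mono τ hj (show j ≤ i by omega) hi
  omega

lemma l_strict (τ : TripleA) {i : ℕ} {w : Equiv.Perm ℕ} (hw : SatisfiesTriple τ w)
    (hi : 1 ≤ i) (hj : i < τ.s) :
    (NE w (τ.pf (i+1)) (τ.qf (i+1))).card < (NE w (τ.pf i) (τ.qf i)).card := by
  obtain ⟨_, _, h⟩ := sat_iff.1 hw
  have h1 := h i hi (by omega)
  have h2 := h (i+1) (by omega) (by omega)
  have h3 := τ.hineq i hi hj
  have := NW_add_NE w (τ.pf i) (τ.qf i)
  have := NW_add_SW w (τ.pf i) (τ.qf i)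
  have := NW_add_NE w (τ.pf (i+1)) (τ.qf (i+1))
  have := NW_add_SW w (τ.pf (i+1)) (τ.qf (i+1))
  omega

lemma l_last (τ : TripleA) {w : Equiv.Perm ℕ} (hw : SatisfiesTriple τ w) :
    0 < (NE w (τ.pf τ.s) (τ.qf τ.s)).card := by
  obtain ⟨_, _, h⟩ := sat_iff.1 hw
  have h1 := h τ.s τ.hs le_rfl
  have h3 := τ.hlast
  have := NW_add_NE w (τ.pf τ.s) (τ.qf τ.s)
  have := NW_add_SW w (τ.pf τ.s) (τ.qf τ.s)
  omega

/-! ### Existence of a permutation satisfying the conditions -/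

lemma step_q {w : Equiv.Perm ℕ} (h0 : w 0 = 0) (hf : FixesAeFin w) (p q c : ℕ) (hc : q < w c) :
    ∃ w' : Equiv.Perm ℕ, w' 0 = 0 ∧ FixesAeFin w' ∧ w' c = q + 1 ∧
      ∀ P Q, p ≤ P → Q ≤ q → SW w' P Q = SW w P Q := by
  refine ⟨Equiv.swap (w c) (q + 1) * w, ?_, fixes_mul (fixes_swap _ _) hf, ?_, ?_⟩
  · simp only [Equiv.Perm.mul_apply, h0]
    exact Equiv.swap_apply_of_ne_of_ne (by omega) (by omega)
  · simp
  · intro P Q hP hQ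
    ext j
    simp only [mem_SW, Equiv.Perm.mul_apply]
    rw [Equiv.swap_apply_def]
    split_ifs <;> omega

lemma step_p {w : Equiv.Perm ℕ} (h0 : w 0 = 0) (hf : FixesAeFin w) (p q c : ℕ) (hc : c ≤ p)
    (hc0 : 0 < c) :
    ∃ w' : Equiv.Perm ℕ, w' 0 = 0 ∧ FixesAeFin w' ∧ w' p = w c ∧
      ∀ P Q, p ≤ P → Q ≤ q → SW w' P Q = SW w P Q := by
  refine ⟨w * Equiv.swap c p, ?_, fixes_mul hf (fixes_swap _ _), ?_, ?_⟩
  · simp only [Equiv.Perm.mul_apply]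
    rw [Equiv.swap_apply_of_ne_of_ne (by omega) (by omega), h0]
  · simp
  · intro P Q hP hQ
    ext j
    simp only [mem_SW, Equiv.Perm.mul_apply]
    by_cases hj : P < j
    · rw [Equiv.swap_apply_of_ne_of_ne (by omega) (by omega)]
    · simp [hj]

lemma SW_succ_q {w : Equiv.Perm ℕ} {p q c : ℕ} (hc : w c = q + 1) :
    (SW w p (q+1)).card = (SW w p q).card + if p < c then 1 else 0 := by
  split_ifs with h
  · have : SW w p (q+1) = insert c (SW w p q) := by
      ext j; simp only [mem_SW, Finset.mem_insert]
      have : w j = q + 1 ↔ j = c := by rw [← hc]; exact w.injective.eq_iff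
      by_cases hj : j = c
      · subst hj; omega
      · have : w j ≠ q + 1 := by tauto
        omega
    rw [this, Finset.card_insert_of_notMem]
    simp [mem_SW, hc]
  · change _ = (SW w _ q).card
    apply congrArg Finset.card
    ext j; simp only [mem_SW]
    have : w j = q + 1 ↔ j = c := by rw [← hc]; exact w.injective.eq_iff
    by_cases hj : j = c
    · subst hj; omega
    · have : w j ≠ q + 1 := by tauto
      omega

lemma SW_pred_p {w : Equiv.Perm ℕ} {p q : ℕ} :
    (SW w p q).card = (SW w (p+1) q).card + if w (p+1) ≤ q then 1 else 0 := by
  split_ifs with h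
  · have : SW w p q = insert (p+1) (SW w (p+1) q) := by
      ext j; simp only [mem_SW, Finset.mem_insert]
      by_cases hj : j = p+1
      · subst hj; omega
      · omega
    rw [this, Finset.card_insert_of_notMem]
    simp [mem_SW]
  · change _ = (SW w _ q).card
    apply congrArg Finset.card
    ext j; simp only [mem_SW]
    by_cases hj : j = p+1
    · subst hj; omega
    · omega

lemma extend (p' q' k' : ℕ) (hk : k' ≤ q') (hl : q' ≤ k' + p') : ∀ n p q k, ∀ w : Equiv.Perm ℕ,
    n = (p - p') + (q' - q) → w 0 = 0 → FixesAeFin w → (SW w p q).card = k → p' ≤ p → q ≤ q' →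
    k ≤ k' → k' + p' + q ≤ k + p + q' →
    ∃ w' : Equiv.Perm ℕ, w' 0 = 0 ∧ FixesAeFin w' ∧ (SW w' p' q').card = k' ∧
      ∀ P Q, p ≤ P → Q ≤ q → SW w' P Q = SW w P Q := by
  intro n
  induction n with
  | zero =>
    intro p q k w hn h0 hf hc hp hq hkk hll
    obtain rfl : p = p' := by omega
    obtain rfl : q = q' := by omega
    exact ⟨w, h0, hf, by omega, fun _ _ _ _ => rfl⟩
  | succ n ih =>
    intro p q k w hn h0 hf hc hp hq hkk hll
    have e1 := NW_add_NE w p q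
    have e2 := NW_add_SW w p q
    by_cases hqq : q < q'
    · by_cases hk1 : k < k'
      · obtain ⟨N, hN, _⟩ := exists_bound hf
        obtain ⟨w1, a0, af, ac, aS⟩ := step_q h0 hf p q (N + p + q + 1)
          (by rw [hN _ (by omega)]; omega)
        have hS := SW_succ_q (p := p) ac
        rw [if_pos (by omega), aS p q le_rfl le_rfl] at hS
        obtain ⟨w2, b0, bf, bc, bS⟩ := ih p (q+1) (k+1) w1 (by omega) a0 af (by omega) (by omega)
          (by omega) (by omega) (by omega)
        refine ⟨w2, b0, bf, bc, fun P Q hP hQ => ?_⟩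
        rw [bS P Q hP (by omega), aS P Q hP hQ]
      · have : 0 < (NE w p q).card := by omega
        obtain ⟨c, hcm⟩ := Finset.card_pos.1 this
        rw [mem_NE] at hcm
        obtain ⟨w1, a0, af, ac, aS⟩ := step_q h0 hf p q c hcm.2
        have hS := SW_succ_q (p := p) ac
        rw [if_neg (by omega), aS p q le_rfl le_rfl] at hS
        obtain ⟨w2, b0, bf, bc, bS⟩ := ih p (q+1) k w1 (by omega) a0 af (by omega) (by omega)
          (by omega) (by omega) (by omega)
        refine ⟨w2, b0, bf, bc, fun P Q hP hQ => ?_⟩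
        rw [bS P Q hP (by omega), aS P Q hP hQ]
    · obtain ⟨p, rfl⟩ : ∃ r, p = r + 1 := ⟨p - 1, by omega⟩
      by_cases hk1 : k < k'
      · have : 1 < (NW w (p+1) q).card := by omega
        obtain ⟨c, hcm, hc0⟩ := Finset.exists_mem_ne this 0
        rw [mem_NW] at hcm
        obtain ⟨w1, a0, af, ac, aS⟩ := step_p h0 hf (p+1) q c hcm.1 (by omega)
        have hS := SW_pred_p (w := w1) (p := p) (q := q)
        rw [if_pos (by omega), aS (p+1) q le_rfl le_rfl] at hS
        obtain ⟨w2, b0, bf, bc, bS⟩ := ih p q (k+1) w1 (by omega) a0 af (by omega) (by omega)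
          (by omega) (by omega) (by omega)
        refine ⟨w2, b0, bf, bc, fun P Q hP hQ => ?_⟩
        rw [bS P Q (by omega) (by omega), aS P Q hP hQ]
      · have : 0 < (NE w (p+1) q).card := by omega
        obtain ⟨c, hcm⟩ := Finset.card_pos.1 this
        rw [mem_NE] at hcm
        have hc0 : 0 < c := by
          rcases Nat.eq_zero_or_pos c with h | h
          · subst h; omega
          · exact h
        obtain ⟨w1, a0, af, ac, aS⟩ := step_p h0 hf (p+1) q c hcm.1 hc0
        have hS := SW_pred_p (w := w1) (p := p) (q := q)
        rw [if_neg (by omega), aS (p+1) q le_rfl le_rfl] at hS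
        obtain ⟨w2, b0, bf, bc, bS⟩ := ih p q k w1 (by omega) a0 af (by omega) (by omega)
          (by omega) (by omega) (by omega)
        refine ⟨w2, b0, bf, bc, fun P Q hP hQ => ?_⟩
        rw [bS P Q (by omega) (by omega), aS P Q hP hQ]

lemma l_nonneg (τ : TripleA) {i : ℕ} (hi : 1 ≤ i) (his : i ≤ τ.s) :
    τ.qf i ≤ τ.kf i + τ.pf i := by
  induction his using Nat.decreasingInduction with
  | self => have := τ.hlast; omega
  | of_succ n hn ih => have := τ.hineq n hi hn; have := ih (by omega); omega

lemma exists_sat (τ : TripleA) : ∃ w, SatisfiesTriple τ w := by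
  have key : ∀ n, 1 ≤ n → n ≤ τ.s → ∃ w : Equiv.Perm ℕ, w 0 = 0 ∧ FixesAeFin w ∧
      ∀ i, 1 ≤ i → i ≤ n → (SW w (τ.pf i) (τ.qf i)).card = τ.kf i := by
    intro n hn
    induction n, hn using Nat.le_induction with
    | base =>
      intro h1
      obtain ⟨w, w0, wf, wc, -⟩ := extend (τ.pf 1) (τ.qf 1) (τ.kf 1) (τ.hkq 1 le_rfl h1)
        (l_nonneg τ le_rfl h1) _ (τ.pf 1) 0 0 1 rfl rfl (fixes_of_bound (N := 0) (by simp))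
        (by
          rw [Finset.card_eq_zero, Finset.eq_empty_iff_forall_notMem]
          intro j; rw [mem_SW]; simp; omega) le_rfl (by omega) (by omega)
        (by have := τ.hkq 1 le_rfl h1; omega)
      refine ⟨w, w0, wf, fun i hi hi' => ?_⟩
      obtain rfl : i = 1 := by omega
      exact wc
    | succ n hn ih =>
      intro h1
      obtain ⟨w, w0, wf, wc⟩ := ih (by omega)
      obtain ⟨w', w0', wf', wc', wS⟩ := extend (τ.pf (n+1)) (τ.qf (n+1)) (τ.kf (n+1))
        (τ.hkq _ (by omega) h1)
        (l_nonneg τ (by omega) h1) _ (τ.pf n) (τ.qf n) (τ.kf n) w rfl w0 wf (wc n hn le_rfl)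
        (τ.hpdec n hn (by omega)) (τ.hqinc n hn (by omega)) (τ.hkinc n hn (by omega)).le
        (τ.hineq n hn (by omega)).le
      refine ⟨w', w0', wf', fun i hi hi' => ?_⟩
      rcases Nat.lt_or_ge n i with h | h
      · obtain rfl : i = n + 1 := by omega
        exact wc'
      · rw [wS _ _ (p_anti τ hi h (by omega)) (q_mono τ hi h (by omega))]
        exact wc i hi h
  obtain ⟨w, h⟩ := key τ.s τ.hs le_rfl
  exact ⟨w, sat_iff.2 h⟩

/-! ### Swapping an unseparated inversion -/

lemma swap_SW {w : Equiv.Perm ℕ} {a b p q : ℕ} (hab : a < b) (hw : w b < w a)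
    (h : ¬ (a ≤ p ∧ p < b ∧ w b ≤ q ∧ q < w a)) :
    (SW (w * Equiv.swap a b) p q).card = (SW w p q).card := by
  by_cases hpb : b ≤ p
  · congr 1
    ext j
    simp only [mem_SW, Equiv.Perm.mul_apply]
    by_cases hj : p < j
    · rw [Equiv.swap_apply_of_ne_of_ne (by omega) (by omega)]
    · simp [hj]
  by_cases hpa : p < a
  · refine Finset.card_bij (fun j _ => Equiv.swap a b j) ?_ ?_ ?_
    · intro j hj
      simp only [mem_SW, Equiv.Perm.mul_apply] at hj ⊢
      refine ⟨?_, hj.2⟩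
      rw [Equiv.swap_apply_def]; split_ifs <;> omega
    · intro x _ y _ hxy
      exact (Equiv.swap a b).injective hxy
    · intro j hj
      refine ⟨Equiv.swap a b j, ?_, by simp⟩
      simp only [mem_SW, Equiv.Perm.mul_apply] at hj ⊢
      refine ⟨?_, by simpa using hj.2⟩
      rw [Equiv.swap_apply_def]; split_ifs <;> omega
  · congr 1
    ext j
    simp only [mem_SW, Equiv.Perm.mul_apply]
    by_cases hja : j = a
    · subst hja; omega
    by_cases hjb : j = b
    · subst hjb
      rw [Equiv.swap_apply_right]; omega
    · rw [Equiv.swap_apply_of_ne_of_ne hja hjb]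

lemma swap_sum {w : Equiv.Perm ℕ} {a b N : ℕ} (hab : a < b) (hw : w b < w a) (hb : b < N) :
    ∑ j ∈ Finset.range N, j * w j < ∑ j ∈ Finset.range N, j * (w * Equiv.swap a b) j := by
  have ha : a ∈ Finset.range N := by simp; omega
  have hb' : b ∈ (Finset.range N).erase a := by simp; omega
  rw [← Finset.add_sum_erase _ _ ha, ← Finset.add_sum_erase _ _ hb',
    ← Finset.add_sum_erase _ _ ha, ← Finset.add_sum_erase _ _ hb']
  have : ∑ x ∈ ((Finset.range N).erase a).erase b, x * (w * Equiv.swap a b) x =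
      ∑ x ∈ ((Finset.range N).erase a).erase b, x * w x := by
    refine Finset.sum_congr rfl fun x hx => ?_
    simp only [Finset.mem_erase] at hx
    rw [Equiv.Perm.mul_apply, Equiv.swap_apply_of_ne_of_ne hx.2.1 hx.1]
  rw [this]
  simp only [Equiv.Perm.mul_apply, Equiv.swap_apply_left, Equiv.swap_apply_right]
  obtain ⟨c, rfl⟩ := Nat.exists_eq_add_of_lt hab
  obtain ⟨d, hd⟩ := Nat.exists_eq_add_of_lt hw
  rw [hd]
  nlinarith

lemma exists_sep (τ : TripleA) : ∃ w, SatisfiesTriple τ w ∧ Sep τ w := by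
  obtain ⟨w₀, hw₀⟩ := exists_sat τ
  obtain ⟨N, hN, -⟩ := exists_bound hw₀.2.1
  have key : ∀ n, ∀ w : Equiv.Perm ℕ, SatisfiesTriple τ w → (∀ j, N < j → w j = j) →
      n + ∑ j ∈ Finset.range (N+1), j * w j = (N + 1) * (N * N) →
      ∃ w, SatisfiesTriple τ w ∧ Sep τ w := by
    intro n
    induction n using Nat.strong_induction_on with
    | _ n ih =>
      intro w hw hwN hn
      by_cases hs : Sep τ w
      · exact ⟨w, hw, hs⟩
      unfold Sep at hs
      push Not at hs
      obtain ⟨a, b, hab, hwab, hi⟩ := hs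
      have hle : ∀ j, j ≤ N → w j ≤ N := by
        intro j hj
        by_contra hc
        have := w.injective (hwN (w j) (by omega))
        omega
      have hbN : b ≤ N := by
        by_contra hc
        have h1 := hwN b (by omega)
        rcases Nat.lt_or_ge N a with h | h
        · have := hwN a h; omega
        · have := hle a h; omega
      have h0a : a ≠ 0 := by
        rintro rfl
        have := hw.1; omega
      have hw' : SatisfiesTriple τ (w * Equiv.swap a b) := by
        obtain ⟨g0, gf, gc⟩ := sat_iff.1 hw
        refine sat_iff.2 ⟨?_, fixes_mul gf (fixes_swap _ _), fun i h1 h2 => ?_⟩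
        · rw [Equiv.Perm.mul_apply, Equiv.swap_apply_of_ne_of_ne (by omega) (by omega), g0]
        · rw [swap_SW hab hwab, gc i h1 h2]
          intro hh
          exact hi i ⟨h1, h2, hh⟩
      have hwN' : ∀ j, N < j → (w * Equiv.swap a b) j = j := by
        intro j hj
        rw [Equiv.Perm.mul_apply, Equiv.swap_apply_of_ne_of_ne (by omega) (by omega), hwN j hj]
      have hle' : ∀ j, j ≤ N → (w * Equiv.swap a b) j ≤ N := by
        intro j hj
        by_contra hc
        have := (w * Equiv.swap a b).injective (hwN' ((w * Equiv.swap a b) j) (by omega))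
        omega
      have hlt := swap_sum (N := N + 1) hab hwab (by omega)
      have hbd : ∑ j ∈ Finset.range (N+1), j * (w * Equiv.swap a b) j ≤ (N + 1) * (N * N) := by
        have := Finset.sum_le_card_nsmul (Finset.range (N+1))
          (fun j => j * (w * Equiv.swap a b) j) (N * N) (by
            intro j hj
            have hj' : j ≤ N := by simp at hj; omega
            exact Nat.mul_le_mul hj' (hle' j hj'))
        simpa using this
      exact ih ((N + 1) * (N * N) - ∑ j ∈ Finset.range (N+1), j * (w * Equiv.swap a b) j)
        (by omega) _ hw' hwN' (by omega)
  have hle : ∀ j, j ≤ N → w₀ j ≤ N := by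
    intro j hj
    by_contra hc
    have := w₀.injective (hN (w₀ j) (by omega))
    omega
  have hbd : ∑ j ∈ Finset.range (N+1), j * w₀ j ≤ (N + 1) * (N * N) := by
    have := Finset.sum_le_card_nsmul (Finset.range (N+1))
      (fun j => j * w₀ j) (N * N) (by
        intro j hj
        have hj' : j ≤ N := by simp at hj; omega
        exact Nat.mul_le_mul hj' (hle j hj'))
    simpa using this
  exact key ((N + 1) * (N * N) - ∑ j ∈ Finset.range (N+1), j * w₀ j) w₀ hw₀ hN (by omega)

/-! ### Uniqueness of the separated permutation -/

lemma sep_unique_aux {τ : TripleA} {w w' : Equiv.Perm ℕ} (hw : SatisfiesTriple τ w)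
    (hw' : SatisfiesTriple τ w') (hs : Sep τ w') (j : ℕ) (hj : ∀ a, a < j → w a = w' a)
    (hlt : w j < w' j) : False := by
  obtain ⟨j', hj'⟩ := w'.surjective (w j)
  have hjj' : j < j' := by
    rcases lt_trichotomy j j' with h | h | h
    · exact h
    · subst h; omega
    · have := hj j' h
      rw [hj'] at this
      have := w.injective this; omega
  have hex := hs j j' hjj' (by omega)
  have hmax : ∃ i, SepBy τ w' i j j' ∧ ∀ m, SepBy τ w' m j j' → m ≤ i := by
    classical
    obtain ⟨i₀, hi₀⟩ := hex
    refine ⟨Nat.findGreatest (fun i => SepBy τ w' i j j') τ.s, ?_, fun m hm => ?_⟩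
    · exact Nat.findGreatest_spec (P := fun i => SepBy τ w' i j j') hi₀.2.1 hi₀
    · exact Nat.le_findGreatest hm.2.1 hm
  obtain ⟨i, ⟨hi1, his, hip, hip', hiq, hiq'⟩, hmax⟩ := hmax
  have hno : ∀ c, j < c → c ≤ τ.pf i → ¬ w' c ≤ τ.qf i := by
    intro c hjc hc hwc
    obtain ⟨m, hm1, hms, hmp, hmp', hmq, hmq'⟩ := hs j c hjc (by omega)
    have him : i < m := lt_of_p τ hm1 his (by omega)
    have hqm := q_mono τ hi1 him.le hms
    have := hmax m ⟨hm1, hms, hmp, by omega, by omega, hmq'⟩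
    omega
  have c1 := (sat_iff.1 hw).2.2 i hi1 his
  have c2 := (sat_iff.1 hw').2.2 i hi1 his
  have e1 := NW_add_SW w (τ.pf i) (τ.qf i)
  have e2 := NW_add_SW w' (τ.pf i) (τ.qf i)
  have hlt : (NW w' (τ.pf i) (τ.qf i)).card < (NW w (τ.pf i) (τ.qf i)).card := by
    apply Finset.card_lt_card
    rw [Finset.ssubset_iff_of_subset]
    · refine ⟨j, ?_, ?_⟩ <;> rw [mem_NW] <;> omega
    · intro c
      rw [mem_NW, mem_NW]
      rintro ⟨h1, h2⟩
      refine ⟨h1, ?_⟩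
      rcases lt_trichotomy c j with h | h | h
      · rw [hj c h]; exact h2
      · subst h; omega
      · exact absurd h2 (hno c h h1)
  omega

lemma sep_unique {τ : TripleA} {w w' : Equiv.Perm ℕ} (hw : SatisfiesTriple τ w)
    (hw' : SatisfiesTriple τ w') (hs : Sep τ w) (hs' : Sep τ w') : w = w' := by
  ext j
  induction j using Nat.strong_induction_on with
  | _ j ih =>
    rcases lt_trichotomy (w j) (w' j) with h | h | h
    · exact (sep_unique_aux hw hw' hs' j ih h).elim
    · exact h
    · exact (sep_unique_aux hw' hw hs j (fun a ha => (ih a ha).symm) h).elim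

/-! ### Counting separated pairs -/

/-- the set of pairs separated by one of the first `n` conditions -/
def SepSet (τ : TripleA) (w : Equiv.Perm ℕ) (n : ℕ) : Finset (ℕ × ℕ) :=
  (Finset.Icc 1 n).biUnion fun i => NE w (τ.pf i) (τ.qf i) ×ˢ SW w (τ.pf i) (τ.qf i)

lemma NE_card {τ : TripleA} {w : Equiv.Perm ℕ} (hw : SatisfiesTriple τ w) {i : ℕ} (h1 : 1 ≤ i)
    (h2 : i ≤ τ.s) : (NE w (τ.pf i) (τ.qf i)).card + τ.qf i = τ.kf i + τ.pf i := by
  have h := (sat_iff.1 hw).2.2 i h1 h2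
  have := NW_add_NE w (τ.pf i) (τ.qf i)
  have := NW_add_SW w (τ.pf i) (τ.qf i)
  omega

lemma sepSet_card {τ : TripleA} {w : Equiv.Perm ℕ} (hw : SatisfiesTriple τ w) (n : ℕ)
    (hn : n ≤ τ.s) : (SepSet τ w n).card =
      ∑ i ∈ Finset.range n, (τ.kf (i+1) + τ.pf (i+1) - τ.qf (i+1)) * (τ.kf (i+1) - τ.kf i) := by
  induction n with
  | zero => simp [SepSet]
  | succ n ih =>
    have hk := (sat_iff.1 hw).2.2
    set A := NE w (τ.pf (n+1)) (τ.qf (n+1)) with hA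
    set B := SW w (τ.pf (n+1)) (τ.qf (n+1)) with hB
    obtain ⟨C, hCB, hCc, hC1, hC2⟩ : ∃ C : Finset ℕ, C ⊆ B ∧ C.card = τ.kf n ∧
        (∀ x ∈ SepSet τ w n, x.2 ∈ C) ∧ (∀ x ∈ A, ∀ y ∈ C, (x, y) ∈ SepSet τ w n) := by
      rcases Nat.eq_zero_or_pos n with h | h
      · subst h
        refine ⟨∅, by simp, by simp [(τ.hnorm 0 (Or.inl rfl)).1], by simp [SepSet], by simp⟩
      · have hp := τ.hpdec n h (by omega)
        have hq := τ.hqinc n h (by omega)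
        refine ⟨SW w (τ.pf n) (τ.qf n), ?_, hk n h (by omega), ?_, ?_⟩
        · intro y; rw [hB, mem_SW, mem_SW]; omega
        · intro x hx
          simp only [SepSet, Finset.mem_biUnion, Finset.mem_Icc, Finset.mem_product] at hx
          obtain ⟨i, hi, -, hx2⟩ := hx
          rw [mem_SW] at hx2 ⊢
          have := p_anti τ hi.1 hi.2 (by omega)
          have := q_mono τ hi.1 hi.2 (by omega)
          omega
        · intro x hx y hy
          simp only [SepSet, Finset.mem_biUnion, Finset.mem_Icc, Finset.mem_product]
          refine ⟨n, ⟨h, le_rfl⟩, ?_, hy⟩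
          rw [hA, mem_NE] at hx
          rw [mem_NE]
          omega
    have hS : SepSet τ w (n+1) = SepSet τ w n ∪ A ×ˢ (B \ C) := by
      ext ⟨x, y⟩
      have h1 : (x, y) ∈ SepSet τ w (n+1) ↔ (x, y) ∈ SepSet τ w n ∨ (x ∈ A ∧ y ∈ B) := by
        simp only [SepSet, Finset.mem_biUnion, Finset.mem_Icc, Finset.mem_product]
        constructor
        · rintro ⟨i, ⟨h1, h2⟩, h3⟩
          rcases Nat.lt_or_ge n i with h | h
          · obtain rfl : i = n + 1 := by omega
            exact Or.inr h3
          · exact Or.inl ⟨i, ⟨h1, h⟩, h3⟩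
        · rintro (⟨i, ⟨h1, h2⟩, h3⟩ | h3)
          · exact ⟨i, ⟨h1, by omega⟩, h3⟩
          · exact ⟨n+1, ⟨by omega, le_rfl⟩, h3⟩
      rw [h1, Finset.mem_union, Finset.mem_product, Finset.mem_sdiff]
      constructor
      · rintro (h | ⟨h2, h3⟩)
        · exact Or.inl h
        · by_cases hy : y ∈ C
          · exact Or.inl (hC2 x h2 y hy)
          · exact Or.inr ⟨h2, h3, hy⟩
      · rintro (h | ⟨h2, h3, _⟩)
        · exact Or.inl h
        · exact Or.inr ⟨h2, h3⟩
    have hdisj : Disjoint (SepSet τ w n) (A ×ˢ (B \ C)) := by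
      rw [Finset.disjoint_left]
      rintro x hx hx2
      rw [Finset.mem_product, Finset.mem_sdiff] at hx2
      exact hx2.2.2 (hC1 x hx)
    rw [hS, Finset.card_union_of_disjoint hdisj, ih (by omega), Finset.sum_range_succ,
      Finset.card_product, Finset.card_sdiff_of_subset hCB, hCc, hB, hk (n+1) (by omega) hn]
    have := NE_card hw (i := n+1) (by omega) hn
    rw [← hA] at this
    congr 2
    omega

lemma inv_finite {w : Equiv.Perm ℕ} (hf : FixesAeFin w) :
    {p : ℕ × ℕ | p.1 < p.2 ∧ w p.2 < w p.1}.Finite := by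
  obtain ⟨N, h1, h2⟩ := exists_bound hf
  refine ((Set.finite_Iic N).prod (Set.finite_Iic N)).subset ?_
  rintro ⟨a, b⟩ ⟨hab, hw⟩
  simp only at hab hw
  simp only [Set.mem_prod, Set.mem_Iic]
  have hb : b ≤ N := by
    by_contra hc
    have h3 := h1 b (by omega)
    rcases Nat.lt_or_ge N a with h | h
    · have := h1 a h; omega
    · have := h2 a h; omega
  omega

lemma mem_sepSet {τ : TripleA} {w : Equiv.Perm ℕ} {a b : ℕ} :
    (a, b) ∈ SepSet τ w τ.s ↔ ∃ i, SepBy τ w i a b := by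
  simp only [SepSet, Finset.mem_biUnion, Finset.mem_Icc, Finset.mem_product, mem_NE, mem_SW, SepBy]
  constructor
  · rintro ⟨i, h⟩; exact ⟨i, by tauto⟩
  · rintro ⟨i, h⟩; exact ⟨i, by tauto⟩

lemma sepSet_subset {τ : TripleA} {w : Equiv.Perm ℕ} :
    (SepSet τ w τ.s : Set (ℕ × ℕ)) ⊆ {p : ℕ × ℕ | p.1 < p.2 ∧ w p.2 < w p.1} := by
  rintro ⟨a, b⟩ h
  obtain ⟨i, h1, h2, h3, h4, h5, h6⟩ := mem_sepSet.1 h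
  simp only [Set.mem_ofPred_eq]
  omega

lemma le_invNum {τ : TripleA} {w : Equiv.Perm ℕ} (hf : FixesAeFin w) :
    (SepSet τ w τ.s).card ≤ invNum w := by
  rw [← Set.ncard_coe_finset]
  exact Set.ncard_le_ncard sepSet_subset (inv_finite hf)

lemma invNum_eq_iff {τ : TripleA} {w : Equiv.Perm ℕ} (hf : FixesAeFin w) :
    invNum w ≤ (SepSet τ w τ.s).card ↔ Sep τ w := by
  constructor
  · intro h a b hab hw
    rw [← Set.ncard_coe_finset] at h
    have := Set.eq_of_subset_of_ncard_le (sepSet_subset (τ := τ)) h (inv_finite hf)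
    have h2 : (a, b) ∈ {p : ℕ × ℕ | p.1 < p.2 ∧ w p.2 < w p.1} := ⟨hab, hw⟩
    rw [← this] at h2
    exact mem_sepSet.1 h2
  · intro h
    rw [← Set.ncard_coe_finset]
    refine Set.ncard_le_ncard ?_ (Finset.finite_toSet _)
    rintro ⟨a, b⟩ ⟨hab, hw⟩
    exact mem_sepSet.2 (h a b hab hw)

lemma isMin_iff {τ : TripleA} {w : Equiv.Perm ℕ} :
    IsMinFor τ w ↔ SatisfiesTriple τ w ∧ Sep τ w := by
  constructor
  · rintro ⟨h1, h2⟩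
    refine ⟨h1, ?_⟩
    obtain ⟨w', h3, h4⟩ := exists_sep τ
    rw [← invNum_eq_iff h1.2.1]
    have := (invNum_eq_iff h3.2.1).2 h4
    have := h2 w' h3
    rw [sepSet_card h3 _ le_rfl] at *
    rw [sepSet_card h1 _ le_rfl] at *
    omega
  · rintro ⟨h1, h2⟩
    refine ⟨h1, fun w' h3 => ?_⟩
    have e1 := (invNum_eq_iff h1.2.1).2 h2
    have e2 := le_invNum (τ := τ) h3.2.1
    rw [sepSet_card h1 _ le_rfl] at e1
    rw [sepSet_card h3 _ le_rfl] at e2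
    omega

lemma part_one (τ : TripleA) : (∃! w : Equiv.Perm ℕ, IsMinFor τ w) ∧
      (∀ w : Equiv.Perm ℕ, IsMinFor τ w → Avoids2143 w ∧ w ≠ 1) := by
  constructor
  · obtain ⟨w, h1, h2⟩ := exists_sep τ
    refine ⟨w, isMin_iff.2 ⟨h1, h2⟩, fun w' h' => ?_⟩
    obtain ⟨h3, h4⟩ := isMin_iff.1 h'
    exact sep_unique h3 h1 h4 h2
  · intro w h
    obtain ⟨h1, h2⟩ := isMin_iff.1 h
    constructor
    · rintro ⟨a, b, c, d, hab, hbc, hcd, w1, w2, w3⟩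
      obtain ⟨i, i1, i2, i3, i4, i5, i6⟩ := h2 a b hab w1
      obtain ⟨j, j1, j2, j3, j4, j5, j6⟩ := h2 c d hcd w3
      have := lt_of_p τ i1 j2 (by omega)
      have := lt_of_q τ i2 j1 (by omega)
      omega
    · rintro rfl
      have e := (sat_iff.1 h1).2.2 τ.s τ.hs le_rfl
      have e2 := (τ.hpos τ.s τ.hs le_rfl).1
      obtain ⟨b, hb⟩ := Finset.card_pos.1 (e ▸ e2)
      obtain ⟨a, ha⟩ := Finset.card_pos.1 (l_last τ h1)
      rw [mem_SW] at hb
      rw [mem_NE] at ha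
      simp at ha hb
      omega

/-! ### The essential set -/

def Ess (w : Equiv.Perm ℕ) (p q : ℕ) : Prop :=
  q < w p ∧ w (p + 1) ≤ q ∧ p < w.symm q ∧ w.symm (q + 1) ≤ p

lemma ess_of_index {τ : TripleA} {w : Equiv.Perm ℕ} (hw : SatisfiesTriple τ w) (hs : Sep τ w)
    {i : ℕ} (h1 : 1 ≤ i) (h2 : i ≤ τ.s) : Ess w (τ.pf i) (τ.qf i) := by
  obtain ⟨w0, wf, wc⟩ := sat_iff.1 hw
  obtain ⟨a, ha1, ha2, ha3⟩ : ∃ a, a ≤ τ.pf i ∧ τ.qf i < w a ∧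
      ∀ m, i < m → m ≤ τ.s → ¬ (a ≤ τ.pf m ∧ τ.qf m < w a) := by
    rcases Nat.lt_or_ge i τ.s with h | h
    · obtain ⟨a, h3, h4⟩ := Finset.exists_mem_notMem_of_card_lt_card (l_strict τ hw h1 h)
      rw [mem_NE] at h3 h4
      refine ⟨a, h3.1, h3.2, fun m hm hm' => ?_⟩
      have := p_anti τ (by omega) (show i + 1 ≤ m by omega) hm'
      have := q_mono τ (by omega) (show i + 1 ≤ m by omega) hm'
      omega
    · obtain rfl : i = τ.s := by omega
      obtain ⟨a, h3⟩ := Finset.card_pos.1 (l_last τ hw)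
      rw [mem_NE] at h3
      exact ⟨a, h3.1, h3.2, fun m hm hm' => by omega⟩
  obtain ⟨b, hb1, hb2, hb3⟩ : ∃ b, τ.pf i < b ∧ w b ≤ τ.qf i ∧
      ∀ m, 1 ≤ m → m < i → ¬ (τ.pf m < b ∧ w b ≤ τ.qf m) := by
    rcases Nat.lt_or_ge 1 i with h | h
    · obtain ⟨n, rfl⟩ : ∃ n, i = n + 1 := ⟨i - 1, by omega⟩
      have hlt : (SW w (τ.pf n) (τ.qf n)).card < (SW w (τ.pf (n+1)) (τ.qf (n+1))).card := by
        rw [wc _ (by omega) (by omega), wc _ (by omega) (by omega)]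
        exact τ.hkinc n (by omega) (by omega)
      obtain ⟨b, h3, h4⟩ := Finset.exists_mem_notMem_of_card_lt_card hlt
      rw [mem_SW] at h3 h4
      refine ⟨b, h3.1, h3.2, fun m hm hm' => ?_⟩
      have := p_anti τ hm (show m ≤ n by omega) (by omega)
      have := q_mono τ hm (show m ≤ n by omega) (by omega)
      omega
    · have hk : 0 < (SW w (τ.pf i) (τ.qf i)).card := by
        rw [wc i h1 h2]; exact (τ.hpos i h1 h2).1
      obtain ⟨b, h3⟩ := Finset.card_pos.1 hk
      rw [mem_SW] at h3
      exact ⟨b, h3.1, h3.2, fun m hm hm' => by omega⟩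
  refine ⟨?_, ?_, ?_, ?_⟩
  · by_contra hc
    have hne : a ≠ τ.pf i := by rintro rfl; omega
    obtain ⟨m, m1, m2, m3, m4, m5, m6⟩ := hs a (τ.pf i) (by omega) (by omega)
    exact ha3 m (lt_of_p τ m1 h2 m4) m2 ⟨m3, m6⟩
  · by_contra hc
    have hne : b ≠ τ.pf i + 1 := by rintro rfl; omega
    obtain ⟨m, m1, m2, m3, m4, m5, m6⟩ := hs (τ.pf i + 1) b (by omega) (by omega)
    exact hb3 m m1 (lt_of_p τ h1 m2 (by omega)) ⟨m4, m5⟩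
  · by_contra hc
    obtain ⟨c, hcq⟩ : ∃ c, w c = τ.qf i := w.surjective _
    rw [← hcq, Equiv.symm_apply_apply] at hc
    have hne : w b ≠ τ.qf i := by
      rw [← hcq]; intro h; have := w.injective h; omega
    obtain ⟨m, m1, m2, m3, m4, m5, m6⟩ := hs c b (by omega) (by omega)
    exact hb3 m m1 (lt_of_q τ m2 h1 (by omega)) ⟨m4, m5⟩
  · by_contra hc
    obtain ⟨c, hcq⟩ : ∃ c, w c = τ.qf i + 1 := w.surjective _
    rw [← hcq, Equiv.symm_apply_apply] at hc
    have hne : w a ≠ τ.qf i + 1 := by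
      rw [← hcq]; intro h; have := w.injective h; omega
    obtain ⟨m, m1, m2, m3, m4, m5, m6⟩ := hs a c (by omega) (by omega)
    exact ha3 m (lt_of_q τ h2 m1 (by omega)) m2 ⟨m3, m6⟩

lemma index_of_ess {τ : TripleA} {w : Equiv.Perm ℕ} (hs : Sep τ w) {p q : ℕ} (h : Ess w p q) :
    ∃ i, 1 ≤ i ∧ i ≤ τ.s ∧ τ.pf i = p ∧ τ.qf i = q := by
  obtain ⟨e1, e2, e3, e4⟩ := h
  obtain ⟨c, hc⟩ : ∃ c, w c = q := w.surjective _
  obtain ⟨d, hd⟩ : ∃ c, w c = q + 1 := w.surjective _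
  rw [← hd, Equiv.symm_apply_apply] at e4
  have e3' : p < c := by rw [← hc, Equiv.symm_apply_apply] at e3; exact e3
  obtain ⟨i, i1, i2, i3, i4, i5, i6⟩ := hs p (p+1) (by omega) (by omega)
  obtain ⟨j, j1, j2, j3, j4, j5, j6⟩ := hs d c (by omega) (by omega)
  obtain ⟨m, m1, m2, m3, m4, m5, m6⟩ := hs p c (by omega) (by omega)
  obtain ⟨n, n1, n2, n3, n4, n5, n6⟩ := hs d (p+1) (by omega) (by omega)
  have cmp : ∀ x y, 1 ≤ x → 1 ≤ y → x ≤ τ.s → y ≤ τ.s →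
      (x ≤ y ∧ τ.pf y ≤ τ.pf x ∧ τ.qf x ≤ τ.qf y) ∨
      (y < x ∧ τ.pf x ≤ τ.pf y ∧ τ.qf y ≤ τ.qf x) := by
    intro x y hx hy hx' hy'
    rcases Nat.lt_or_ge y x with h | h
    · exact Or.inr ⟨h, p_anti τ hy h.le hx', q_mono τ hy h.le hx'⟩
    · exact Or.inl ⟨h, p_anti τ hx h hy', q_mono τ hx h hy'⟩
  by_contra hno
  push Not at hno
  have := hno i i1 i2
  have := hno j j1 j2
  have := hno m m1 m2
  have := hno n n1 n2
  have := cmp m n m1 n1 m2 n2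
  have := cmp i m i1 m1 i2 m2
  have := cmp i n i1 n1 i2 n2
  have := cmp j m j1 m1 j2 m2
  have := cmp j n j1 n1 j2 n2
  omega

lemma k_image_card (τ : TripleA) {i : ℕ} (h : i ≤ τ.s) :
    ((Finset.Icc 1 i).image τ.kf).card = i := by
  rw [Finset.card_image_of_injOn, Nat.card_Icc]
  · omega
  · intro x hx y hy hxy
    simp at hx hy
    rcases lt_trichotomy x y with h' | h' | h'
    · have := k_strict τ hx.1 h' (by omega); omega
    · exact h'
    · have := k_strict τ hy.1 h' (by omega); omega

lemma k_rank (τ : TripleA) {i : ℕ} (h1 : 1 ≤ i) (h : i ≤ τ.s) :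
    (((Finset.Icc 1 τ.s).image τ.kf).filter (fun x => x ≤ τ.kf i)).card = i := by
  refine Eq.trans ?_ (k_image_card τ h)
  congr 1
  ext x
  simp only [Finset.mem_filter, Finset.mem_image, Finset.mem_Icc]
  constructor
  · rintro ⟨⟨a, ha, rfl⟩, hle⟩
    refine ⟨a, ⟨ha.1, ?_⟩, rfl⟩
    by_contra hc
    have := k_strict τ h1 (show i < a by omega) ha.2
    omega
  · rintro ⟨a, ha, rfl⟩
    refine ⟨⟨a, ⟨ha.1, by omega⟩, rfl⟩, ?_⟩
    rcases Nat.lt_or_ge a i with h' | h'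
    · exact (k_strict τ ha.1 h' h).le
    · obtain rfl : a = i := by omega
      exact le_rfl

lemma triple_unique {τ τ' : TripleA} {w : Equiv.Perm ℕ} (hw : SatisfiesTriple τ w) (hs : Sep τ w)
    (hw' : SatisfiesTriple τ' w) (hs' : Sep τ' w) : τ = τ' := by
  have step : ∀ σ σ' : TripleA, SatisfiesTriple σ w → Sep σ w → SatisfiesTriple σ' w →
      Sep σ' w → ∀ i, 1 ≤ i → i ≤ σ.s → ∃ j, 1 ≤ j ∧ j ≤ σ'.s ∧ σ'.pf j = σ.pf i ∧
        σ'.qf j = σ.qf i ∧ σ'.kf j = σ.kf i := by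
    intro σ σ' h1 h2 h3 h4 i hi hi'
    obtain ⟨j, j1, j2, j3, j4⟩ := index_of_ess h4 (ess_of_index h1 h2 hi hi')
    refine ⟨j, j1, j2, j3, j4, ?_⟩
    rw [← (sat_iff.1 h1).2.2 i hi hi', ← (sat_iff.1 h3).2.2 j j1 j2, j3, j4]
  have hK : (Finset.Icc 1 τ.s).image τ.kf = (Finset.Icc 1 τ'.s).image τ'.kf := by
    ext x
    simp only [Finset.mem_image, Finset.mem_Icc]
    constructor
    · rintro ⟨i, hi, rfl⟩
      obtain ⟨j, j1, j2, -, -, j5⟩ := step τ τ' hw hs hw' hs' i hi.1 hi.2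
      exact ⟨j, ⟨j1, j2⟩, j5⟩
    · rintro ⟨i, hi, rfl⟩
      obtain ⟨j, j1, j2, -, -, j5⟩ := step τ' τ hw' hs' hw hs i hi.1 hi.2
      exact ⟨j, ⟨j1, j2⟩, j5⟩
  have hss : τ.s = τ'.s := by
    rw [← k_image_card τ le_rfl, hK, k_image_card τ' le_rfl]
  have main : ∀ i, τ'.kf i = τ.kf i ∧ τ'.pf i = τ.pf i ∧ τ'.qf i = τ.qf i := by
    intro i
    by_cases hi : 1 ≤ i ∧ i ≤ τ.s
    · obtain ⟨j, j1, j2, j3, j4, j5⟩ := step τ τ' hw hs hw' hs' i hi.1 hi.2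
      have r1 := k_rank τ hi.1 hi.2
      have r2 := k_rank τ' j1 j2
      rw [hK, ← j5, r2] at r1
      subst r1
      exact ⟨j5, j3, j4⟩
    · have a := τ.hnorm i (by omega)
      have b := τ'.hnorm i (by omega)
      omega
  have m1 : τ.kf = τ'.kf := funext fun i => (main i).1.symm
  have m2 : τ.pf = τ'.pf := funext fun i => (main i).2.1.symm
  have m3 : τ.qf = τ'.qf := funext fun i => (main i).2.2.symm
  cases τ
  cases τ'
  simp only at hss m1 m2 m3
  subst hss m1 m2 m3
  rfl

/-! ### The triple of a vexillary permutation -/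

lemma exists_ess {w : Equiv.Perm ℕ} {a b : ℕ} (hab : a < b) (hw : w b < w a) :
    ∃ p q, Ess w p q ∧ a ≤ p ∧ p < b ∧ w b ≤ q ∧ q < w a := by
  have key : ∀ n p q, n = (b - p) + (w a - q) → a ≤ p → p < b → w b ≤ q → q < w a →
      q < w p → p < w.symm q →
      ∃ p q, Ess w p q ∧ a ≤ p ∧ p < b ∧ w b ≤ q ∧ q < w a := by
    intro n
    induction n using Nat.strong_induction_on with
    | _ n ih =>
      intro p q hn h1 h2 h3 h4 h5 h6
      obtain ⟨c, hc⟩ : ∃ c, w c = q := w.surjective _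
      obtain ⟨d, hd⟩ : ∃ c, w c = q + 1 := w.surjective _
      have hcs : w.symm q = c := by rw [← hc, Equiv.symm_apply_apply]
      have hds : w.symm (q+1) = d := by rw [← hd, Equiv.symm_apply_apply]
      by_cases g1 : w (p+1) ≤ q
      · by_cases g2 : w.symm (q+1) ≤ p
        · exact ⟨p, q, ⟨h5, g1, h6, g2⟩, h1, h2, h3, h4⟩
        · have hne : w p ≠ q + 1 := by
            intro h; rw [← hd] at h; have := w.injective h; omega
          have hne2 : w a ≠ q + 1 := by
            intro h; rw [← hd] at h; have := w.injective h; omega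
          exact ih _ (by omega) p (q+1) rfl h1 h2 (by omega) (by omega) (by omega) (by omega)
      · have hne : p + 1 ≠ b := by rintro rfl; omega
        have hne2 : p + 1 ≠ c := by rintro rfl; omega
        exact ih _ (by omega) (p+1) q rfl (by omega) (by omega) h3 h4 (by omega) (by omega)
  exact key _ a (w b) rfl le_rfl hab le_rfl hw hw (by simpa using hab)

lemma ess_finite {w : Equiv.Perm ℕ} (hf : FixesAeFin w) :
    {e : ℕ × ℕ | Ess w e.1 e.2}.Finite := by
  obtain ⟨N, h1, h2⟩ := exists_bound hf
  refine ((Set.finite_Iic N).prod (Set.finite_Iic N)).subset ?_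
  rintro ⟨p, q⟩ ⟨e1, e2, -, -⟩
  simp only at e1 e2
  simp only [Set.mem_prod, Set.mem_Iic]
  have hp : p ≤ N := by
    by_contra hc
    have := h1 p (by omega)
    have := h1 (p+1) (by omega)
    omega
  have := h2 p hp
  omega

lemma ess_chain {w : Equiv.Perm ℕ} (hv : Avoids2143 w) {p q p' q' : ℕ} (h : Ess w p q)
    (h' : Ess w p' q') (hp : p < p') (hq : q < q') : False := by
  obtain ⟨-, e2, -, e4⟩ := h
  obtain ⟨f1, -, f3, -⟩ := h'
  apply hv
  have hne : p + 1 ≠ p' := by rintro rfl; omega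
  have hne2 : q + 1 ≠ q' := by rintro rfl; omega
  refine ⟨w.symm (q+1), p+1, p', w.symm q', by omega, by omega, f3, ?_, ?_, ?_⟩ <;>
    simp only [Equiv.apply_symm_apply] <;> omega

lemma ess_mono_k {w : Equiv.Perm ℕ} {p q p' q' : ℕ} (h : Ess w p q)
    (h' : Ess w p' q') (hp : p' ≤ p) (hq : q ≤ q') (hne : ¬ (p = p' ∧ q = q')) :
    (SW w p q).card < (SW w p' q').card ∧ (NE w p' q').card < (NE w p q).card := by
  obtain ⟨e1, e2, e3, e4⟩ := h
  obtain ⟨f1, f2, f3, f4⟩ := h'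
  constructor
  · apply Finset.card_lt_card
    rw [Finset.ssubset_iff_of_subset (by intro j; rw [mem_SW, mem_SW]; omega)]
    rcases Nat.lt_or_ge p' p with hpp | hpp
    · exact ⟨p' + 1, by rw [mem_SW]; omega, by rw [mem_SW]; omega⟩
    · refine ⟨w.symm q', ?_, ?_⟩ <;> rw [mem_SW, Equiv.apply_symm_apply] <;> omega
  · apply Finset.card_lt_card
    rw [Finset.ssubset_iff_of_subset (by intro j; rw [mem_NE, mem_NE]; omega)]
    rcases Nat.lt_or_ge p' p with hpp | hpp
    · exact ⟨p, by rw [mem_NE]; omega, by rw [mem_NE]; omega⟩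
    · refine ⟨w.symm (q+1), ?_, ?_⟩ <;> rw [mem_NE, Equiv.apply_symm_apply] <;> omega

lemma ess_total {w : Equiv.Perm ℕ} (hv : Avoids2143 w) {p q p' q' : ℕ} (h : Ess w p q)
    (h' : Ess w p' q') : (p' ≤ p ∧ q ≤ q') ∨ (p ≤ p' ∧ q' ≤ q) := by
  by_contra hc
  rcases Nat.lt_or_ge p p' with h1 | h1
  · rcases Nat.lt_or_ge q q' with h2 | h2
    · exact ess_chain hv h h' h1 h2
    · omega
  · rcases Nat.lt_or_ge q' q with h2 | h2
    · exact ess_chain hv h' h (by omega) h2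
    · omega

lemma ess_inj {w : Equiv.Perm ℕ} (hv : Avoids2143 w) {p q p' q' : ℕ} (h : Ess w p q)
    (h' : Ess w p' q') (hk : (SW w p q).card = (SW w p' q').card) : p = p' ∧ q = q' := by
  by_contra hne
  rcases ess_total hv h h' with ⟨h1, h2⟩ | ⟨h1, h2⟩
  · have := (ess_mono_k h h' h1 h2 hne).1; omega
  · have := (ess_mono_k h' h h1 h2 (by omega)).1; omega

lemma ess_lt {w : Equiv.Perm ℕ} (hv : Avoids2143 w) {p q p' q' : ℕ} (h : Ess w p q)
    (h' : Ess w p' q') (hk : (SW w p q).card < (SW w p' q').card) :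
    p' ≤ p ∧ q ≤ q' ∧ (SW w p' q').card + p' + q < (SW w p q).card + p + q' := by
  have hne : ¬ (p = p' ∧ q = q') := by rintro ⟨rfl, rfl⟩; omega
  rcases ess_total hv h h' with ⟨h1, h2⟩ | ⟨h1, h2⟩
  · have := (ess_mono_k h h' h1 h2 hne).2
    have := NW_add_NE w p q
    have := NW_add_SW w p q
    have := NW_add_NE w p' q'
    have := NW_add_SW w p' q'
    omega
  · have := (ess_mono_k h' h h1 h2 (by omega)).1; omega

lemma enum (K : Finset ℕ) : ∃ g : ℕ → ℕ, (∀ i, 1 ≤ i → i ≤ K.card → g i ∈ K) ∧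
    (∀ i, 1 ≤ i → i < K.card → g i < g (i+1)) ∧
    (∀ x ∈ K, ∃ i, 1 ≤ i ∧ i ≤ K.card ∧ g i = x) ∧
    (∀ i, (i = 0 ∨ K.card < i) → g i = 0) := by
  refine ⟨fun i => if h : 1 ≤ i ∧ i ≤ K.card then K.orderEmbOfFin rfl ⟨i - 1, by omega⟩ else 0,
    ?_, ?_, ?_, ?_⟩
  · intro i h1 h2
    simp only [dif_pos (And.intro h1 h2)]
    exact Finset.orderEmbOfFin_mem _ _ _
  · intro i h1 h2
    have a : 1 ≤ i ∧ i ≤ K.card := by omega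
    have b : 1 ≤ i + 1 ∧ i + 1 ≤ K.card := by omega
    simp only [dif_pos a, dif_pos b]
    apply (K.orderEmbOfFin rfl).strictMono
    rw [Fin.lt_def]
    simp only
    omega
  · intro x hx
    have : x ∈ Set.range (K.orderEmbOfFin rfl) := by
      rw [Finset.range_orderEmbOfFin]; exact hx
    obtain ⟨⟨i, hi⟩, rfl⟩ := this
    have b : 1 ≤ i + 1 ∧ i + 1 ≤ K.card := by omega
    refine ⟨i + 1, b.1, b.2, ?_⟩
    simp only [dif_pos b]
    congr 1
  · intro i hi
    have : ¬ (1 ≤ i ∧ i ≤ K.card) := by omega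
    simp only [dif_neg this]

lemma exists_inversion {w : Equiv.Perm ℕ} (h : w ≠ 1) : ∃ a b, a < b ∧ w b < w a := by
  by_contra hc
  push Not at hc
  apply h
  have hm : StrictMono w := by
    intro a b hab
    have := hc a b hab
    have : w a ≠ w b := fun h => by have := w.injective h; omega
    omega
  have hm' : StrictMono w.symm := by
    intro a b hab
    by_contra hlt
    have := hm.monotone (not_lt.1 hlt)
    simp at this
    omega
  ext n
  have h1 := hm.le_apply (x := n)
  have h2 := hm'.le_apply (x := w n)
  simp at h2
  simp
  omega

lemma exists_triple {w : Equiv.Perm ℕ} (h0 : w 0 = 0) (hf : FixesAeFin w) (h1 : w ≠ 1)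
    (hv : Avoids2143 w) : ∃ τ, SatisfiesTriple τ w ∧ Sep τ w := by
  classical
  set K : Finset ℕ := (ess_finite hf).toFinset.image (fun e => (SW w e.1 e.2).card) with hKdef
  have hK : ∀ k, k ∈ K ↔ ∃ p q, Ess w p q ∧ (SW w p q).card = k := by
    intro k
    simp [hKdef]
  obtain ⟨g, g1, g2, g3, g4⟩ := enum K
  have hP : ∀ i, ∃ p q, (1 ≤ i → i ≤ K.card → Ess w p q ∧ (SW w p q).card = g i) ∧
      ((i = 0 ∨ K.card < i) → p = 0 ∧ q = 0) := by
    intro i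
    by_cases hi : 1 ≤ i ∧ i ≤ K.card
    · obtain ⟨p, q, h⟩ := (hK _).1 (g1 i hi.1 hi.2)
      exact ⟨p, q, fun _ _ => h, fun h => by omega⟩
    · exact ⟨0, 0, fun _ _ => by omega, fun _ => ⟨rfl, rfl⟩⟩
  choose P Q hPQ hPQ0 using hP
  have hE := fun i a b => (hPQ i a b).1
  have hC := fun i a b => (hPQ i a b).2
  have hne : 1 ≤ K.card := by
    obtain ⟨a, b, hab, hw⟩ := exists_inversion h1
    obtain ⟨p, q, he, -⟩ := exists_ess hab hw
    exact Finset.card_pos.2 ⟨_, (hK _).2 ⟨p, q, he, rfl⟩⟩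
  have hlt : ∀ i, 1 ≤ i → i < K.card → P (i+1) ≤ P i ∧ Q i ≤ Q (i+1) ∧
      g (i+1) + P (i+1) + Q i < g i + P i + Q (i+1) := by
    intro i a b
    have := g2 i a b
    rw [← hC i a b.le, ← hC (i+1) (by omega) (by omega)] at this ⊢
    exact ess_lt hv (hE i a b.le) (hE (i+1) (by omega) (by omega)) this
  let τ : TripleA :=
    { s := K.card
      kf := g
      pf := P
      qf := Q
      hs := hne
      hpos := by
        intro i a b
        obtain ⟨e1, e2, e3, e4⟩ := hE i a b
        refine ⟨?_, ?_, ?_⟩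
        · rw [← hC i a b]
          exact Finset.card_pos.2 ⟨P i + 1, by rw [mem_SW]; omega⟩
        · by_contra hc
          have h' : P i = 0 := by omega
          rw [h', h0] at e1
          omega
        · by_contra hc
          have h' : w (P i + 1) = 0 := by omega
          rw [← h0] at h'
          have := w.injective h'
          omega
      hkinc := g2
      hpdec := fun i a b => (hlt i a b).1
      hqinc := fun i a b => (hlt i a b).2.1
      hkq := by
        intro i a b
        rw [← hC i a b]
        have := NW_add_SW w (P i) (Q i)
        have := NW_pos h0 (P i) (Q i)
        omega
      hineq := fun i a b => (hlt i a b).2.2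
      hlast := by
        have e := hE K.card hne le_rfl
        rw [← hC K.card hne le_rfl]
        have := NW_add_SW w (P K.card) (Q K.card)
        have := NW_add_NE w (P K.card) (Q K.card)
        have : 0 < (NE w (P K.card) (Q K.card)).card :=
          Finset.card_pos.2 ⟨P K.card, by rw [mem_NE]; exact ⟨le_rfl, e.1⟩⟩
        omega
      hnorm := fun i hi => ⟨g4 i hi, hPQ0 i hi⟩ }
  refine ⟨τ, sat_iff.2 ⟨h0, hf, fun i a b => hC i a b⟩, ?_⟩
  intro a b hab hw
  obtain ⟨p, q, he, r1, r2, r3, r4⟩ := exists_ess hab hw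
  obtain ⟨i, i1, i2, i3⟩ := g3 _ ((hK _).2 ⟨p, q, he, rfl⟩)
  obtain ⟨rfl, rfl⟩ := ess_inj hv he (hE i i1 i2) (by rw [hC i i1 i2, i3])
  exact ⟨i, i1, i2, r1, r2, r3, r4⟩

end VexTriple

/-- every triple of type A has a unique permutation `w(τ)` of minimal
inversion number satisfying its conditions; `w(τ)` is vexillary (2143-avoiding) and
not the identity; and `τ ↦ w(τ)` is a bijection onto the non-identity finitary
2143-avoiding permutations of the positive integers. -/
theorem tripleA_vexillary_bijection :
    (∀ τ : TripleA,
      (∃! w : Equiv.Perm ℕ, IsMinFor τ w) ∧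
      (∀ w : Equiv.Perm ℕ, IsMinFor τ w → Avoids2143 w ∧ w ≠ 1)) ∧
    (∀ w : Equiv.Perm ℕ, w 0 = 0 → FixesAeFin w → w ≠ 1 → Avoids2143 w →
      ∃! τ : TripleA, IsMinFor τ w) := by
  refine ⟨VexTriple.part_one, fun w h0 hf h1 hv => ?_⟩
  obtain ⟨τ, ht, hs⟩ := VexTriple.exists_triple h0 hf h1 hv
  refine ⟨τ, VexTriple.isMin_iff.2 ⟨ht, hs⟩, fun τ' h' => ?_⟩
  obtain ⟨ht', hs'⟩ := VexTriple.isMin_iff.1 h'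
  exact VexTriple.triple_unique ht' hs' ht hs
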